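/- The cycle graph C_10 on 10 vertices satisfies rvcl(C_10) = 5. -/

import Mathlib

namespace LocatingRainbow

open SimpleGraph

variable {V : Type*}

/-- The internal vertices of a walk: its support without the endpoints. -/
def internalVertices {G : SimpleGraph V} {u v : V} (p : G.Walk u v) : List V :=
  p.support.tail.dropLast

/-- `c` is a rainbow vertex coloring of `G` (with colors in `Fin k`) if any two distinct
vertices are joined by a path whose internal vertices have pairwise distinct colors. -/
def IsRainbowVertexColoring (G : SimpleGraph V) {k : ℕ} (c : V → Fin k) : Prop :=
  ∀ u v : V, u ≠ v → ∃ p : G.Walk u v, p.IsPath ∧ ((internalVertices p).map c).Nodup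

/-- The distance from a vertex `v` to the color class of the color `i`. -/
noncomputable def distToColor (G : SimpleGraph V) {k : ℕ} (c : V → Fin k) (v : V) (i : Fin k) :
    ℕ :=
  sInf {m | ∃ y, c y = i ∧ G.dist v y = m}

/-- The rainbow code of a vertex `v`: the vector of distances to all color classes. -/
noncomputable def rainbowCode (G : SimpleGraph V) {k : ℕ} (c : V → Fin k) (v : V) :
    Fin k → ℕ :=
  fun i => distToColor G c v i

/-- `c` is a locating rainbow coloring if it is a rainbow vertex coloring and distinct
vertices have distinct rainbow codes. -/
def IsLocatingRainbowColoring (G : SimpleGraph V) {k : ℕ} (c : V → Fin k) : Prop :=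
  IsRainbowVertexColoring G c ∧ Function.Injective (rainbowCode G c)

/-- The rainbow vertex connection number of `G`. -/
noncomputable def rvc (G : SimpleGraph V) : ℕ :=
  sInf {k | ∃ c : V → Fin k, IsRainbowVertexColoring G c}

/-- The locating rainbow connection number of `G`. -/
noncomputable def rvcl (G : SimpleGraph V) : ℕ :=
  sInf {k | ∃ c : V → Fin k, IsLocatingRainbowColoring G c}

end LocatingRainbow

/-!
In a cycle, a path between two vertices runs along one of the two arcs they cut out, so a rainbow
coloring is one in which, for any two vertices, one of these arcs has an injectively colored
interior.

Suppose `C_10` has a locating rainbow coloring with four colors. An arc with five interior vertices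
repeats a color, hence any three consecutive vertices have distinct colors and no color occurs more
than three times. So two colors occur three times, each along a progression `x, x + 3, x + 6`, and
comparing antipodal pairs forces the two progressions to be adjacent. The rest of the coloring is
then so constrained that `x - 1, …, x + 2` and `x + 5, …, x + 8` carry the same four distinct colors
in the same order, which gives `x` and `x + 6` the same rainbow code.
-/

namespace LocatingRainbow

open SimpleGraph
open scoped Fin.NatCast Fin.CommRing Finset

section Coloring

variable {V : Type*} {G : SimpleGraph V} {k l : ℕ}

lemma mem_internalVertices {u v x : V} {p : G.Walk u v} (hx : x ∈ p.support) (hxu : x ≠ u)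
    (hxv : x ≠ v) : x ∈ internalVertices p := by
  have hx_tail : x ∈ p.support.tail := ((Walk.mem_support_iff p).1 hx).resolve_left hxu
  refine List.mem_dropLast_of_mem_of_ne_getLast hx_tail ?_
  rwa [List.getLast_tail, Walk.getLast_support]

lemma internalVertices_reverse {u v : V} (p : G.Walk u v) :
    internalVertices p.reverse = (internalVertices p).reverse := by
  simp only [internalVertices, Walk.support_reverse, List.tail_reverse, List.dropLast_reverse,
    List.tail_dropLast]

lemma IsLocatingRainbowColoring.comp_injective {c : V → Fin k}
    (hc : IsLocatingRainbowColoring G c) {f : Fin k → Fin l} (hf : f.Injective) :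
    IsLocatingRainbowColoring G (f ∘ c) := by
  refine ⟨fun u v huv ↦ ?_, fun u v huv ↦ hc.2 (funext fun i ↦ ?_)⟩
  · obtain ⟨p, hp, hnodup⟩ := hc.1 u v huv
    exact ⟨p, hp, List.map_map (f := c) (g := f) ▸ hnodup.map hf⟩
  · simpa only [rainbowCode, distToColor, Function.comp_apply, hf.eq_iff] using congrFun huv (f i)

lemma distToColor_eq_dist {c : V → Fin k} {v w : V}
    (hw : ∀ y, c y = c w → G.dist v w ≤ G.dist v y) :
    distToColor G c v (c w) = G.dist v w := by
  refine IsLeast.csInf_eq ⟨⟨w, rfl, rfl⟩, ?_⟩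
  rintro _ ⟨y, hy, rfl⟩
  exact hw y hy

lemma le_add_length_of_forall_adj {f : V → ℕ} (hf : ∀ x y, G.Adj x y → f y ≤ f x + 1) {u v : V}
    (p : G.Walk u v) : f v ≤ f u + p.length := by
  induction p with
  | nil => exact le_rfl
  | cons hadj p ih =>
    rw [Walk.length_cons]
    have := hf _ _ hadj
    omega

end Coloring

section Windows

/-- Any `w` consecutive vertices of the cycle receive pairwise distinct colors; the cycle is the
additive group `A`, with successor `u ↦ u + 1`. -/
def HasRainbowWindows {A κ : Type*} [AddMonoidWithOne A] (c : A → κ) (w : ℕ) : Prop :=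
  ∀ ⦃j : ℕ⦄, 0 < j → j < w → ∀ u, c u ≠ c (u + j)

lemma HasRainbowWindows.mul_card_fiber_le {A κ : Type*} [AddGroupWithOne A] [Fintype A]
    [DecidableEq κ] {c : A → κ} {w : ℕ} (hc : HasRainbowWindows c w) (a : κ) :
    w * #{u | c u = a} ≤ Fintype.card A := by
  have shift_unique {u v : A} (hu : c u = a) (hv : c v = a) {i j : ℕ} (hij : i ≤ j) (hj : j < w)
      (h : u + i = v + j) : i = j ∧ u = v := by
    have hu_eq : u = v + (j - i : ℕ) := by
      rw [Nat.cast_sub hij, ← add_sub_assoc, ← h, add_sub_cancel_right]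
    rcases hij.eq_or_lt with rfl | hlt
    · exact ⟨rfl, add_right_cancel h⟩
    · exact absurd (hv.trans (hu_eq ▸ hu).symm) (hc (by omega) (by omega) v)
  have h_inj : Set.InjOn (fun p : ℕ × A ↦ p.2 + p.1)
      (Finset.range w ×ˢ ({u | c u = a} : Finset A) : Finset (ℕ × A)) := by
    rintro ⟨i, u⟩ hu ⟨j, v⟩ hv h
    simp only [Finset.coe_product, Set.mem_prod, Finset.mem_coe, Finset.mem_range,
      Finset.mem_filter_univ] at hu hv
    rcases le_total i j with hij | hji
    · obtain ⟨rfl, rfl⟩ := shift_unique hu.2 hv.2 hij hv.1 h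
      rfl
    · obtain ⟨rfl, rfl⟩ := shift_unique hv.2 hu.2 hji hu.1 h.symm
      rfl
  simpa only [Finset.card_product, Finset.card_range, Finset.card_univ] using
    Finset.card_le_card_of_injOn _ (fun _ _ ↦ Finset.mem_univ _) h_inj

lemma exists_ne_lt_card_fiber {α κ : Type*} [Fintype α] [Fintype κ] [DecidableEq κ] {c : α → κ}
    {m : ℕ} (h_le : ∀ a, #{u | c u = a} ≤ m + 1)
    (h_card : Fintype.card κ * m + 1 < Fintype.card α) :
    ∃ a b, a ≠ b ∧ m < #{u | c u = a} ∧
      m < #{u | c u = b} := by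
  let large : Finset κ := {a | m < #{u | c u = a}}
  have h_sum : Fintype.card α ≤ Fintype.card κ * m + #large := by
    calc Fintype.card α = ∑ a, #{u | c u = a} :=
          Finset.card_eq_sum_card_fiberwise fun _ _ ↦ Finset.mem_coe.2 (Finset.mem_univ _)
      _ ≤ ∑ a, (m + if m < #{u | c u = a} then 1 else 0) := by
          refine Finset.sum_le_sum fun a _ ↦ ?_
          have := h_le a
          split_ifs <;> omega
      _ = Fintype.card κ * m + #large := by
          rw [Finset.sum_add_distrib, Finset.sum_const, Finset.card_univ, smul_eq_mul,
            Finset.sum_boole, Nat.cast_id]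
  obtain ⟨a, ha, b, hb, hab⟩ := Finset.one_lt_card.1 (show 1 < #large by omega)
  exact ⟨a, b, hab, (Finset.mem_filter.1 ha).2, (Finset.mem_filter.1 hb).2⟩

end Windows

section Cycle

variable {n k : ℕ}

lemma val_add_one_cases (a : Fin (n + 1)) :
    (a + 1).val = a.val + 1 ∨ a.val = n ∧ (a + 1).val = 0 := by
  rw [Fin.val_add_one]
  split_ifs with h_last
  · exact Or.inr ⟨congrArg Fin.val h_last, rfl⟩
  · exact Or.inl rfl

lemma val_sub_cases_of_adj (u : Fin (n + 2)) {x y : Fin (n + 2)}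
    (h : (cycleGraph (n + 2)).Adj x y) :
    ((y - u).val = (x - u).val + 1 ∨ (x - u).val = n + 1 ∧ (y - u).val = 0) ∨
      ((x - u).val = (y - u).val + 1 ∨ (y - u).val = n + 1 ∧ (x - u).val = 0) := by
  rcases cycleGraph_adj.1 h with h | h
  · right
    rw [show x - u = y - u + 1 by rw [← h]; abel]
    exact val_add_one_cases (y - u)
  · left
    rw [show y - u = x - u + 1 by rw [← h]; abel]
    exact val_add_one_cases (x - u)

lemma mem_support_or_mem_support {a m b : ℕ} (ham : a < m) (hmb : m < b) (hb : b < n + 2)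
    (ha : 0 < a) {u : Fin (n + 2)} (p : (cycleGraph (n + 2)).Walk u (u + m)) :
    u + a ∈ p.support ∨ u + b ∈ p.support := by
  obtain ⟨d, hd, hfst, hsnd⟩ := p.exists_boundary_dart {x | (x - u).val < a ∨ b < (x - u).val}
    (Or.inl (by simpa using ha)) (by
      simp only [Set.mem_ofPred_eq, add_sub_cancel_left, Fin.val_natCast,
        Nat.mod_eq_of_lt (hmb.trans hb)]
      omega)
  have hadj := val_sub_cases_of_adj u d.adj
  have h_end : (d.snd - u).val = a ∨ (d.snd - u).val = b := by
    simp only [Set.mem_ofPred_eq] at hfst hsnd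
    omega
  have hsnd_mem : u + (d.snd - u).val ∈ p.support := by
    simpa using p.dart_snd_mem_support_of_mem_darts hd
  rcases h_end with h | h <;> rw [h] at hsnd_mem
  · exact Or.inl hsnd_mem
  · exact Or.inr hsnd_mem

lemma exists_walk_support_eq (u : Fin (n + 2)) (m : ℕ) :
    ∃ p : (cycleGraph (n + 2)).Walk u (u + m),
      p.support = (List.range (m + 1)).map fun j : ℕ ↦ u + j := by
  induction m with
  | zero => exact ⟨Walk.nil.copy rfl (by simp), by simp⟩
  | succ m ih =>
    obtain ⟨p, hp⟩ := ih
    have hadj : (cycleGraph (n + 2)).Adj (u + m) (u + (m + 1 : ℕ)) := by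
      rw [cycleGraph_adj]; right; push_cast; abel
    refine ⟨p.concat hadj, ?_⟩
    rw [Walk.support_concat, hp, List.range_succ (n := m + 1), List.map_append, List.map_singleton]

lemma injOn_add_natCast (u : Fin (n + 2)) : Set.InjOn (fun j : ℕ ↦ u + j) (Set.Iio (n + 2)) := by
  intro i hi j hj hij
  simpa only [Fin.val_natCast, Nat.mod_eq_of_lt hi, Nat.mod_eq_of_lt hj] using
    congrArg Fin.val (add_left_cancel hij)

lemma add_natCast_add_natCast_sub (u : Fin (n + 2)) {m : ℕ} (hm : m ≤ n + 2) :
    u + m + ((n + 2 - m : ℕ) : Fin (n + 2)) = u := by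
  rw [add_assoc, ← Nat.cast_add, Nat.add_sub_of_le hm, Fin.natCast_self, add_zero]

lemma exists_isPath_of_injOn {c : Fin (n + 2) → Fin k} {u v : Fin (n + 2)} {m : ℕ}
    (hm : m < n + 2) (hv : u + m = v) (hc : Set.InjOn (fun j : ℕ ↦ c (u + j)) (Set.Ioo 0 m)) :
    ∃ p : (cycleGraph (n + 2)).Walk u v, p.IsPath ∧ ((internalVertices p).map c).Nodup := by
  subst hv
  obtain ⟨p, hp⟩ := exists_walk_support_eq u m
  refine ⟨p, ?_, ?_⟩
  · rw [Walk.isPath_def, hp]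
    refine List.nodup_range.map_on fun i hi j hj ↦ ?_
    rw [List.mem_range] at hi hj
    exact injOn_add_natCast u (Set.mem_Iio.2 (by omega)) (Set.mem_Iio.2 (by omega))
  · have h_internal : internalVertices p = (List.range' 1 (m - 1)).map fun j : ℕ ↦ u + j := by
      rw [internalVertices, hp]
      cases m with
      | zero => rfl
      | succ m =>
        rw [← List.map_tail, ← List.map_dropLast, List.range_eq_range', List.range'_succ,
          List.tail_cons, zero_add, List.range'_1_concat, List.dropLast_concat,
          Nat.add_sub_cancel]
    rw [h_internal, List.map_map]
    refine (List.nodup_range' (step := 1)).map_on fun i hi j hj ↦ ?_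
    rw [List.mem_range'_1] at hi hj
    exact hc ⟨by omega, by omega⟩ ⟨by omega, by omega⟩

lemma injOn_of_add_mem_support {c : Fin (n + 2) → Fin k} {u : Fin (n + 2)} {m : ℕ}
    (hm : m < n + 2) {p : (cycleGraph (n + 2)).Walk u (u + m)}
    (hnodup : ((internalVertices p).map c).Nodup) {s : Set ℕ}
    (hs : ∀ j ∈ s, 0 < j ∧ j ≠ m ∧ j < n + 2)
    (hp : ∀ j ∈ s, u + (j : Fin (n + 2)) ∈ p.support) :
    Set.InjOn (fun j : ℕ ↦ c (u + j)) s := by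
  have h_internal (j : ℕ) (hj : j ∈ s) : u + (j : Fin (n + 2)) ∈ internalVertices p := by
    obtain ⟨hj_pos, hj_ne, hj_lt⟩ := hs j hj
    have h_ne_start : u + (j : Fin (n + 2)) ≠ u := by
      simpa using (injOn_add_natCast u).ne hj_lt (Set.mem_Iio.2 (by omega)) hj_pos.ne'
    exact mem_internalVertices (hp j hj) h_ne_start ((injOn_add_natCast u).ne hj_lt hm hj_ne)
  exact fun i hi j hj hij ↦ injOn_add_natCast u (hs i hi).2.2 (hs j hj).2.2
    (List.inj_on_of_nodup_map hnodup (h_internal i hi) (h_internal j hj) hij)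

lemma injOn_Ioo_or_injOn_Ioo_of_nodup {c : Fin (n + 2) → Fin k} {u : Fin (n + 2)} {m : ℕ}
    (hm0 : 0 < m) (hm : m < n + 2) {p : (cycleGraph (n + 2)).Walk u (u + m)}
    (hnodup : ((internalVertices p).map c).Nodup) :
    Set.InjOn (fun j : ℕ ↦ c (u + j)) (Set.Ioo 0 m) ∨
      Set.InjOn (fun j : ℕ ↦ c (u + j)) (Set.Ioo m (n + 2)) := by
  by_cases h_arc : ∀ a ∈ Set.Ioo 0 m, u + (a : Fin (n + 2)) ∈ p.support
  · left
    exact injOn_of_add_mem_support hm hnodup (fun a ha ↦ ⟨ha.1, ha.2.ne, ha.2.trans hm⟩) h_arc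
  · right
    push Not at h_arc
    obtain ⟨a, ha, ha_notMem⟩ := h_arc
    refine injOn_of_add_mem_support hm hnodup (fun b hb ↦ ⟨hm0.trans hb.1, hb.1.ne', hb.2⟩)
      fun b hb ↦ ?_
    exact (mem_support_or_mem_support ha.2 hb.1 hb.2 ha.1 p).resolve_left ha_notMem

lemma exists_isPath_of_injOn_compl {c : Fin (n + 2) → Fin k} {u : Fin (n + 2)} {m : ℕ}
    (hm0 : 0 < m) (hm : m < n + 2)
    (hc : Set.InjOn (fun j : ℕ ↦ c (u + j)) (Set.Ioo m (n + 2))) :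
    ∃ p : (cycleGraph (n + 2)).Walk u (u + m), p.IsPath ∧ ((internalVertices p).map c).Nodup := by
  have h_inj : Set.InjOn (fun j : ℕ ↦ c (u + m + j)) (Set.Ioo 0 (n + 2 - m)) := by
    intro i hi j hj hij
    rw [Set.mem_Ioo] at hi hj
    refine Nat.add_left_cancel (hc (x₁ := m + i) (x₂ := m + j) ?_ ?_ ?_)
    · exact ⟨by omega, by omega⟩
    · exact ⟨by omega, by omega⟩
    · simpa only [Nat.cast_add, add_assoc] using hij
  obtain ⟨p, hp, hnodup⟩ :=
    exists_isPath_of_injOn (by omega) (add_natCast_add_natCast_sub u hm.le) h_inj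
  refine ⟨p.reverse, hp.reverse, ?_⟩
  rwa [internalVertices_reverse, List.map_reverse, List.nodup_reverse]

theorem isRainbowVertexColoring_cycleGraph_iff {c : Fin (n + 2) → Fin k} :
    IsRainbowVertexColoring (cycleGraph (n + 2)) c ↔ ∀ u : Fin (n + 2), ∀ m < n + 2, 0 < m →
      Set.InjOn (fun j : ℕ ↦ c (u + j)) (Set.Ioo 0 m) ∨
        Set.InjOn (fun j : ℕ ↦ c (u + j)) (Set.Ioo m (n + 2)) := by
  constructor
  · intro hc u m hm hm0
    have h_ne : u ≠ u + m := by
      simpa using (injOn_add_natCast u).ne (Set.mem_Iio.2 (by omega)) hm hm0.ne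
    obtain ⟨p, -, hnodup⟩ := hc u (u + m) h_ne
    exact injOn_Ioo_or_injOn_Ioo_of_nodup hm0 hm hnodup
  · intro hc u v huv
    obtain ⟨m, hm, rfl⟩ : ∃ m < n + 2, u + (m : Fin (n + 2)) = v :=
      ⟨(v - u).val, (v - u).isLt, by simp⟩
    have hm0 : 0 < m := Nat.pos_of_ne_zero (by rintro rfl; simp at huv)
    rcases hc u m hm hm0 with h | h
    · exact exists_isPath_of_injOn hm rfl h
    · exact exists_isPath_of_injOn_compl hm0 hm h

theorem dist_cycleGraph (u v : Fin (n + 2)) :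
    (cycleGraph (n + 2)).dist u v = min (v - u).val (n + 2 - (v - u).val) := by
  have dist_add_le (w : Fin (n + 2)) (m : ℕ) : (cycleGraph (n + 2)).dist w (w + m) ≤ m := by
    obtain ⟨p, hp⟩ := exists_walk_support_eq w m
    have hlen : p.length = m := by simpa using congrArg List.length hp
    exact (dist_le p).trans_eq hlen
  have h_add_val : u + ((v - u).val : Fin (n + 2)) = v := by simp
  refine le_antisymm (le_min ?_ ?_) ?_
  · simpa only [h_add_val] using dist_add_le u (v - u).val
  · have h_back := add_natCast_add_natCast_sub u (v - u).isLt.le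
    rw [h_add_val] at h_back
    rw [dist_comm]
    simpa only [h_back] using dist_add_le v (n + 2 - (v - u).val)
  · obtain ⟨p, hp⟩ := cycleGraph_connected.exists_walk_length_eq_dist u v
    have h_lipschitz := le_add_length_of_forall_adj
      (f := fun x ↦ min (x - u).val (n + 2 - (x - u).val))
      (fun x y hxy ↦ by have := val_sub_cases_of_adj u hxy; omega) p
    simpa only [sub_self, Fin.val_zero, zero_le, inf_of_le_left, zero_add, hp] using h_lipschitz

lemma dist_cycleGraph_add_left (w u v : Fin (n + 2)) :
    (cycleGraph (n + 2)).dist (w + u) (w + v) = (cycleGraph (n + 2)).dist u v := by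
  rw [dist_cycleGraph, dist_cycleGraph, add_sub_add_left_eq_sub]

lemma dist_cycleGraph_natCast {i j : ℕ} (hij : i ≤ j) (hj : j < n + 2) :
    (cycleGraph (n + 2)).dist (i : Fin (n + 2)) j = min (j - i) (n + 2 - (j - i)) := by
  rw [dist_cycleGraph, ← Nat.cast_sub hij, Fin.val_natCast, Nat.mod_eq_of_lt (by omega)]

lemma eq_of_dist_eq_of_dist_add_one_eq {a u v : Fin (n + 3)}
    (h : (cycleGraph (n + 3)).dist u a = (cycleGraph (n + 3)).dist v a)
    (h_succ : (cycleGraph (n + 3)).dist u (a + 1) = (cycleGraph (n + 3)).dist v (a + 1)) :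
    u = v := by
  simp only [dist_cycleGraph] at h h_succ
  have hu := val_add_one_cases (a - u)
  have hv := val_add_one_cases (a - v)
  rw [sub_add_eq_add_sub] at hu hv
  have h_sub : a - u = a - v := Fin.ext (by omega)
  exact sub_right_inj.1 h_sub

lemma injective_rainbowCode_of_unique_color {c : Fin (n + 3) → Fin k} (a : Fin (n + 3))
    (ha : ∀ y, c y = c a → y = a) (ha_succ : ∀ y, c y = c (a + 1) → y = a + 1) :
    Function.Injective (rainbowCode (cycleGraph (n + 3)) c) := by
  have rainbowCode_apply {w : Fin (n + 3)} (hw : ∀ y, c y = c w → y = w) (v : Fin (n + 3)) :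
      rainbowCode (cycleGraph (n + 3)) c v (c w) = (cycleGraph (n + 3)).dist v w :=
    distToColor_eq_dist fun y hy ↦ (congrArg _ (hw y hy)).ge
  intro u v huv
  refine eq_of_dist_eq_of_dist_add_one_eq (a := a) ?_ ?_
  · rw [← rainbowCode_apply ha, ← rainbowCode_apply ha, huv]
  · rw [← rainbowCode_apply ha_succ, ← rainbowCode_apply ha_succ, huv]

lemma distToColor_add_eq_dist_of_window {r : ℕ} {c : Fin (n + 2) → Fin k} {z : Fin (n + 2)}
    (hr : 2 * r + 2 ≤ n + 2)
    (hz : Set.InjOn (fun j : ℕ ↦ c (z + j)) (Set.Iio (2 * r + 2))) {j : ℕ} (hj : j < 2 * r + 2) :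
    distToColor (cycleGraph (n + 2)) c (z + r) (c (z + j)) =
      (cycleGraph (n + 2)).dist (r : Fin (n + 2)) j := by
  rw [← dist_cycleGraph_add_left z]
  refine distToColor_eq_dist fun y hy ↦ ?_
  obtain ⟨i, hi, rfl⟩ : ∃ i < n + 2, z + (i : Fin (n + 2)) = y :=
    ⟨(y - z).val, (y - z).isLt, by simp⟩
  rw [dist_cycleGraph_add_left, dist_cycleGraph_add_left]
  by_cases hi_lt : i < 2 * r + 2
  · rw [hz hi_lt hj hy]
  · have h_near : (cycleGraph (n + 2)).dist (r : Fin (n + 2)) j ≤ r + 1 := by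
      rcases le_total r j with hrj | hjr
      · rw [dist_cycleGraph_natCast hrj (by omega)]
        omega
      · rw [dist_comm, dist_cycleGraph_natCast hjr (by omega)]
        omega
    have h_far : r + 1 ≤ (cycleGraph (n + 2)).dist (r : Fin (n + 2)) i := by
      rw [dist_cycleGraph_natCast (by omega) hi]
      omega
    exact h_near.trans h_far

lemma rainbowCode_add_eq_of_window {r : ℕ} {c : Fin (n + 2) → Fin (2 * r + 2)}
    {x y : Fin (n + 2)} (hx : Set.InjOn (fun j : ℕ ↦ c (x + j)) (Set.Iio (2 * r + 2)))
    (hxy : ∀ j < 2 * r + 2, c (x + (j : Fin (n + 2))) = c (y + (j : Fin (n + 2)))) :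
    rainbowCode (cycleGraph (n + 2)) c (x + r) = rainbowCode (cycleGraph (n + 2)) c (y + r) := by
  have hx_inj : Function.Injective fun j : Fin (2 * r + 2) ↦ c (x + (j.val : Fin (n + 2))) :=
    fun i j hij ↦ Fin.ext (hx i.isLt j.isLt hij)
  have hr : 2 * r + 2 ≤ n + 2 := by
    simpa only [Fintype.card_fin] using Fintype.card_le_of_injective
      (fun j : Fin (2 * r + 2) ↦ x + (j.val : Fin (n + 2))) (fun i j hij ↦ hx_inj (congrArg c hij))
  have hy : Set.InjOn (fun j : ℕ ↦ c (y + j)) (Set.Iio (2 * r + 2)) :=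
    hx.congr hxy
  funext i
  obtain ⟨j, rfl⟩ := Finite.surjective_of_injective hx_inj i
  calc distToColor (cycleGraph (n + 2)) c (x + r) (c (x + (j.val : Fin (n + 2))))
      = (cycleGraph (n + 2)).dist (r : Fin (n + 2)) (j.val : Fin (n + 2)) :=
        distToColor_add_eq_dist_of_window hr hx j.isLt
    _ = distToColor (cycleGraph (n + 2)) c (y + r) (c (y + (j.val : Fin (n + 2)))) :=
        (distToColor_add_eq_dist_of_window hr hy j.isLt).symm
    _ = distToColor (cycleGraph (n + 2)) c (y + r) (c (x + (j.val : Fin (n + 2)))) := by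
        rw [hxy j j.isLt]

lemma IsRainbowVertexColoring.hasRainbowWindows {c : Fin (n + 2) → Fin k} {w : ℕ}
    (hc : IsRainbowVertexColoring (cycleGraph (n + 2)) c) (hw : w + k < n) :
    HasRainbowWindows c w := by
  intro j hj hjw u
  rcases isRainbowVertexColoring_cycleGraph_iff.1 hc (u - 1) (j + 2) (by omega) (by omega)
    with h | h
  · intro h_eq
    have h_one : 1 = j + 1 := h ⟨by omega, by omega⟩ ⟨by omega, by omega⟩
      (by simpa [sub_add_add_cancel] using h_eq)
    omega
  · have h_card : #(Finset.Ioo (j + 2) (n + 2)) ≤ #(Finset.univ : Finset (Fin k)) :=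
      Finset.card_le_card_of_injOn _ (fun _ _ ↦ Finset.mem_univ _) (by rwa [Finset.coe_Ioo])
    rw [Nat.card_Ioo, Finset.card_fin] at h_card
    omega

end Cycle

section TenCycle

lemma exists_progression_of_two_lt_card_fiber {κ : Type*} [DecidableEq κ] {c : Fin 10 → κ}
    (hc : HasRainbowWindows c 3) {a : κ}
    (ha : 2 < #{u | c u = a}) :
    ∃ x, ∀ i ∈ ({0, 3, 6} : Finset (Fin 10)), c (x + i) = a := by
  obtain ⟨x, y, z, hx, hy, hz, hxy, hxz, hyz⟩ := Finset.two_lt_card_iff.1 ha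
  rw [Finset.mem_filter_univ] at hx hy hz
  have apart {u v : Fin 10} (hu : c u = a) (hv : c v = a) : v ≠ u + 1 ∧ v ≠ u + 2 := by
    constructor
    · rintro rfl
      exact hc (j := 1) (by omega) (by omega) u (hu.trans hv.symm)
    · rintro rfl
      exact hc (j := 2) (by omega) (by omega) u (hu.trans hv.symm)
  -- The three cyclic gaps between `x`, `y`, `z` are at least 3 and sum to 10.
  have h_gaps : ∀ x y z : Fin 10, x ≠ y → x ≠ z → y ≠ z → y ≠ x + 1 ∧ y ≠ x + 2 →
      x ≠ y + 1 ∧ x ≠ y + 2 → z ≠ x + 1 ∧ z ≠ x + 2 → x ≠ z + 1 ∧ x ≠ z + 2 →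
      z ≠ y + 1 ∧ z ≠ y + 2 → y ≠ z + 1 ∧ y ≠ z + 2 →
      ∃ w, ∀ i ∈ ({0, 3, 6} : Finset (Fin 10)), w + i ∈ ({x, y, z} : Finset (Fin 10)) := by
    decide
  obtain ⟨w, hw⟩ := h_gaps x y z hxy hxz hyz (apart hx hy) (apart hy hx) (apart hx hz)
    (apart hz hx) (apart hy hz) (apart hz hy)
  refine ⟨w, fun i hi ↦ ?_⟩
  have hwi := hw i hi
  simp only [Finset.mem_insert, Finset.mem_singleton] at hwi
  rcases hwi with h | h | h <;> rwa [h]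

lemma IsRainbowVertexColoring.apply_ne_or_apply_ne_opposite {k : ℕ} {c : Fin 10 → Fin k}
    (hc : IsRainbowVertexColoring (cycleGraph 10) c) (u : Fin 10) :
    c u ≠ c (u + 3) ∨ c (u + 5) ≠ c (u + 8) := by
  rcases isRainbowVertexColoring_cycleGraph_iff.1 hc (u - 1) 5 (by omega) (by omega) with h | h
  · refine Or.inl fun h_eq ↦ absurd (h (x₁ := 1) (x₂ := 4) (by simp) (by simp) ?_) (by omega)
    convert h_eq using 2 <;> push_cast <;> ring
  · refine Or.inr fun h_eq ↦ absurd (h (x₁ := 6) (x₂ := 9) (by simp) (by simp) ?_) (by omega)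
    convert h_eq using 2 <;> push_cast <;> ring

lemma eq_add_one_of_progressions {κ : Type*} {c : Fin 10 → κ}
    (hc : ∀ u, c u ≠ c (u + 3) ∨ c (u + 5) ≠ c (u + 8)) {a b : κ} (hab : a ≠ b) {x y : Fin 10}
    (hx : ∀ i ∈ ({0, 3, 6} : Finset (Fin 10)), c (x + i) = a)
    (hy : ∀ i ∈ ({0, 3, 6} : Finset (Fin 10)), c (y + i) = b) : y = x + 1 ∨ x = y + 1 := by
  have h_disjoint : ∀ i ∈ ({0, 3, 6} : Finset (Fin 10)), ∀ j ∈ ({0, 3, 6} : Finset (Fin 10)),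
      x + i ≠ y + j := fun i hi j hj h ↦ hab (by rw [← hx i hi, ← hy j hj, h])
  have h_opposite : ∀ i ∈ ({0, 3} : Finset (Fin 10)), ∀ j ∈ ({0, 3} : Finset (Fin 10)),
      x + i + 5 ≠ y + j := by
    intro i hi j hj h
    have add_three_mem : ∀ i ∈ ({0, 3} : Finset (Fin 10)),
        i ∈ ({0, 3, 6} : Finset (Fin 10)) ∧ i + 3 ∈ ({0, 3, 6} : Finset (Fin 10)) := by decide
    obtain ⟨hi_mem, hi_succ⟩ := add_three_mem i hi
    obtain ⟨hj_mem, hj_succ⟩ := add_three_mem j hj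
    rcases hc (x + i) with h_ne | h_ne
    · exact h_ne (by rw [add_assoc, hx i hi_mem, hx (i + 3) hi_succ])
    · refine h_ne ?_
      rw [show x + i + 8 = x + i + 5 + 3 by rw [add_assoc _ 5]; rfl, h, add_assoc, hy j hj_mem,
        hy (j + 3) hj_succ]
  clear hx hy hc hab
  decide +revert

lemma eq_and_eq_of_adjacent_progressions {c : Fin 10 → Fin 4} (hw : HasRainbowWindows c 3)
    (hc : ∀ u, c u ≠ c (u + 3) ∨ c (u + 5) ≠ c (u + 8)) {a b : Fin 4} {x : Fin 10}
    (hx : ∀ i ∈ ({0, 3, 6} : Finset (Fin 10)), c (x + i) = a)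
    (hy : ∀ i ∈ ({0, 3, 6} : Finset (Fin 10)), c (x + 1 + i) = b) :
    c (x + 9) = c (x + 5) ∧ c (x + 8) = c (x + 2) ∧ c (x + 9) ≠ c (x + 2) := by
  have ne_add_one (i : Fin 10) : c (x + i) ≠ c (x + (i + 1)) := by
    simpa only [Nat.cast_one, add_assoc] using hw (j := 1) (by omega) (by omega) (x + i)
  have ne_add_two (i : Fin 10) : c (x + i) ≠ c (x + (i + 2)) := by
    simpa only [Nat.cast_ofNat, add_assoc] using hw (j := 2) (by omega) (by omega) (x + i)
  have opposite_ne (i : Fin 10) (hi : c (x + i) = c (x + (i + 3))) :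
      c (x + (i + 5)) ≠ c (x + (i + 8)) := by
    simpa only [add_assoc, hi, ne_eq, not_true_eq_false, false_or] using hc (x + i)
  have h0 : c (x + 0) = a := hx 0 (by decide)
  have h3 : c (x + 3) = a := hx 3 (by decide)
  have h6 : c (x + 6) = a := hx 6 (by decide)
  have h1 : c (x + 1) = b := by simpa using hy 0 (by decide)
  have h4 : c (x + 4) = b := by simpa [add_assoc] using hy 3 (by decide)
  have h7 : c (x + 7) = b := by simpa [add_assoc] using hy 6 (by decide)
  have h58 : c (x + 5) ≠ c (x + 8) := opposite_ne 0 (h0.trans h3.symm)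
  have h92 : c (x + 9) ≠ c (x + 2) := opposite_ne 4 (h4.trans h7.symm)
  have h89 : c (x + 8) ≠ c (x + 9) := ne_add_one 8
  have hab : a ≠ b := h0 ▸ h1 ▸ ne_add_one 0
  have eq_of_third {p q r : Fin 4} (hp : p ≠ a ∧ p ≠ b) (hq : q ≠ a ∧ q ≠ b) (hr : r ≠ a ∧ r ≠ b)
      (hpr : p ≠ r) (hqr : q ≠ r) : p = q := by
    omega
  have h2 : c (x + 2) ≠ a ∧ c (x + 2) ≠ b :=
    ⟨h0 ▸ (ne_add_two 0).symm, h1 ▸ (ne_add_one 1).symm⟩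
  have h5 : c (x + 5) ≠ a ∧ c (x + 5) ≠ b := ⟨h6 ▸ ne_add_one 5, h7 ▸ ne_add_two 5⟩
  have h8 : c (x + 8) ≠ a ∧ c (x + 8) ≠ b :=
    ⟨h6 ▸ (ne_add_two 6).symm, h7 ▸ (ne_add_one 7).symm⟩
  have h9 : c (x + 9) ≠ a ∧ c (x + 9) ≠ b := ⟨h0 ▸ ne_add_one 9, h7 ▸ (ne_add_two 7).symm⟩
  exact ⟨eq_of_third h9 h5 h8 h89.symm h58, eq_of_third h8 h2 h9 h89 h92.symm, h92⟩

lemma rainbowCode_eq_of_adjacent_progressions {c : Fin 10 → Fin 4} (hw : HasRainbowWindows c 3)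
    (hc : ∀ u, c u ≠ c (u + 3) ∨ c (u + 5) ≠ c (u + 8)) {a b : Fin 4} {x : Fin 10}
    (hx : ∀ i ∈ ({0, 3, 6} : Finset (Fin 10)), c (x + i) = a)
    (hy : ∀ i ∈ ({0, 3, 6} : Finset (Fin 10)), c (x + 1 + i) = b) :
    rainbowCode (cycleGraph 10) c x = rainbowCode (cycleGraph 10) c (x + 6) := by
  obtain ⟨h95, h82, h92⟩ := eq_and_eq_of_adjacent_progressions hw hc hx hy
  have h_window : Set.InjOn (fun j : ℕ ↦ c (x + 9 + j)) (Set.Iio (2 * 1 + 2)) := by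
    have window_ne {i j : ℕ} (hij : i < j) (hj : j < 4) :
        c (x + 9 + (i : Fin 10)) ≠ c (x + 9 + (j : Fin 10)) := by
      by_cases h_near : j - i < 3
      · simpa only [add_assoc, ← Nat.cast_add, Nat.add_sub_of_le hij.le] using
          hw (Nat.sub_pos_of_lt hij) h_near (x + 9 + i)
      · obtain ⟨rfl, rfl⟩ : i = 0 ∧ j = 3 := by omega
        simpa [add_assoc] using h92
    intro i hi j hj hij
    rcases lt_trichotomy i j with h | h | h
    · exact absurd hij (window_ne h hj)
    · exact h
    · exact absurd hij.symm (window_ne h hi)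
  have h_colors (j : ℕ) (hj : j < 2 * 1 + 2) :
      c (x + 9 + (j : Fin 10)) = c (x + 5 + (j : Fin 10)) := by
    interval_cases j
    · simpa using h95
    · simpa [add_assoc] using (hx 0 (by decide)).trans (hx 6 (by decide)).symm
    · simpa [add_assoc] using (hy 0 (by decide)).trans (hy 6 (by decide)).symm
    · simpa [add_assoc] using h82.symm
  simpa [add_assoc] using rainbowCode_add_eq_of_window (n := 8) (r := 1) h_window h_colors

lemma not_isLocatingRainbowColoring_four (c : Fin 10 → Fin 4) :
    ¬IsLocatingRainbowColoring (cycleGraph 10) c := by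
  rintro ⟨hc, h_code⟩
  have hw : HasRainbowWindows c 3 := hc.hasRainbowWindows (n := 8) (by omega)
  have h_opp := hc.apply_ne_or_apply_ne_opposite
  have h_le (a : Fin 4) : #{u | c u = a} ≤ 2 + 1 := by
    have := hw.mul_card_fiber_le a
    rw [Fintype.card_fin] at this
    omega
  obtain ⟨a, b, hab, ha, hb⟩ := exists_ne_lt_card_fiber h_le (by simp)
  obtain ⟨x, hx⟩ := exists_progression_of_two_lt_card_fiber hw ha
  obtain ⟨y, hy⟩ := exists_progression_of_two_lt_card_fiber hw hb
  have add_six_ne (z : Fin 10) : z ≠ z + 6 := by decide +revert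
  rcases eq_add_one_of_progressions h_opp hab hx hy with rfl | rfl
  · exact add_six_ne x (h_code (rainbowCode_eq_of_adjacent_progressions hw h_opp hx hy))
  · exact add_six_ne y (h_code (rainbowCode_eq_of_adjacent_progressions hw h_opp hy hx))

lemma IsLocatingRainbowColoring.five_le {k : ℕ} {c : Fin 10 → Fin k}
    (hc : IsLocatingRainbowColoring (cycleGraph 10) c) : 5 ≤ k := by
  by_contra! hk
  exact not_isLocatingRainbowColoring_four _
    (hc.comp_injective (Fin.castLE_injective (Nat.le_of_lt_succ hk)))

/-- A locating rainbow coloring of the ten-cycle with five colors: the colors `0` and `1` are used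
only once, on adjacent vertices, so the distances to them already determine a vertex. -/
def fiveColoring : Fin 10 → Fin 5 := ![0, 1, 2, 3, 4, 2, 3, 4, 2, 3]

lemma isLocatingRainbowColoring_fiveColoring :
    IsLocatingRainbowColoring (cycleGraph 10) fiveColoring := by
  refine ⟨isRainbowVertexColoring_cycleGraph_iff.2 ?_, ?_⟩
  · simp only [← Finset.coe_Ioo]
    decide
  · exact injective_rainbowCode_of_unique_color (n := 7) 0 (by decide) (by decide)

end TenCycle

end LocatingRainbow

open LocatingRainbow SimpleGraph in
/-- The cycle graph `C_10` satisfies `rvcl(C_10) = 5`. -/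
theorem rvcl_cycleGraph_ten : rvcl (cycleGraph 10) = 5 := by
  refine IsLeast.csInf_eq ⟨⟨fiveColoring, isLocatingRainbowColoring_fiveColoring⟩, ?_⟩
  rintro k ⟨c, hc⟩
  exact hc.five_le
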